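/- arXiv:2510.05060 — 2 statements merged into one kernel-verified Lean document; each statement's English description precedes it below -/
import Mathlib

section
/- Covariance–mixing inequality for bounded variables. Let (Ω, ℱ, P) be a probability space, let 𝒜, ℬ ⊆ ℱ be sub-σ-algebras, and let X be an 𝒜-measurable real random variable and Y a ℬ-measurable real random variable with |X| ≤ 1 and |Y| ≤ 1 almost surely. Then |Cov(X, Y)| = |E[XY] − E[X]E[Y]| ≤ 4·α(𝒜, ℬ), where α(𝒜, ℬ) := sup{ |P(A∩B) − P(A)P(B)| : A ∈ 𝒜, B ∈ ℬ }. -/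
/-! The covariance is linear in each variable, so it is extremal at variables with values in
`{-1, 1}`. If `W` is centred and `X` is `𝒜`-measurable with `|X| ≤ 1`, then
`|E[XW]| = |E[X E[W|𝒜]]| ≤ E|E[W|𝒜]| = 2 E[W 1_A]`, where `A = {E[W|𝒜] ≥ 0} ∈ 𝒜`
(`exists_abs_integral_mul_le`). Applying this to `X` and `W = Y - E[Y]`, and then to `Y` and
`W = 1_A - P(A)`, replaces both variables by indicators and produces the factor `2 * 2 = 4`. -/

open MeasureTheory

/-- The α-mixing coefficient between two sub-σ-algebras `𝒜, ℬ` of a probability space: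
`α(𝒜, ℬ) = sup { |P(A ∩ B) − P(A)P(B)| : A ∈ 𝒜, B ∈ ℬ }`. -/
noncomputable def alphaMix {Ω : Type*} {m : MeasurableSpace Ω} (P : Measure Ω)
    (𝒜 ℬ : MeasurableSpace Ω) : ℝ :=
  sSup {c : ℝ | ∃ A B : Set Ω, MeasurableSet[𝒜] A ∧ MeasurableSet[ℬ] B ∧
    c = |(P (A ∩ B)).toReal - (P A).toReal * (P B).toReal|}

/-- The covariance of two real random variables: `Cov(X, Y) = E[XY] − E[X]E[Y]`. -/
noncomputable def covP {Ω : Type*} {m : MeasurableSpace Ω} (P : Measure Ω)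
    (X Y : Ω → ℝ) : ℝ :=
  (∫ ω, X ω * Y ω ∂P) - (∫ ω, X ω ∂P) * (∫ ω, Y ω ∂P)

/-- Extremal step: among `𝒜`-measurable `X` with `|X| ≤ 1`, the quantity `E[XW]` for a centred `W`
is largest at the sign of `E[W|𝒜]`, and the centring turns that sign into an indicator. -/
lemma exists_abs_integral_mul_le {Ω : Type*} {m m0 : MeasurableSpace Ω} {P : Measure Ω}
    [IsProbabilityMeasure P] (hm : m ≤ m0) {X W : Ω → ℝ} (hX : Measurable[m] X)
    (hXb : ∀ᵐ ω ∂P, |X ω| ≤ 1) (hW : Integrable W P) (hW0 : ∫ ω, W ω ∂P = 0) :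
    ∃ A : Set Ω, MeasurableSet[m] A ∧ |∫ ω, X ω * W ω ∂P| ≤ 2 * ∫ ω in A, W ω ∂P := by
  have hXs : StronglyMeasurable[m] X := hX.stronglyMeasurable
  have hXa : AEStronglyMeasurable X P := (hXs.mono hm).aestronglyMeasurable
  have hXW : Integrable (X * W) P := hW.bdd_mul hXa (c := 1) hXb
  have hZ : Integrable (P[W|m]) P := integrable_condExp
  have hZm : Measurable[m] (P[W|m]) := stronglyMeasurable_condExp.measurable
  have hA : MeasurableSet[m] {ω | 0 ≤ (P[W|m]) ω} := hZm measurableSet_Ici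
  refine ⟨{ω | 0 ≤ (P[W|m]) ω}, hA, ?_⟩
  set A := {ω | 0 ≤ (P[W|m]) ω} with hAdef
  have h1 : ∫ ω, X ω * W ω ∂P = ∫ ω, X ω * (P[W|m]) ω ∂P := by
    calc ∫ ω, X ω * W ω ∂P = ∫ ω, (P[X * W|m]) ω ∂P := (integral_condExp hm).symm
      _ = _ := integral_congr_ae (condExp_mul_of_stronglyMeasurable_left hXs hXW hW)
  have h2 : |∫ ω, X ω * (P[W|m]) ω ∂P| ≤ ∫ ω, |(P[W|m]) ω| ∂P := by
    refine abs_integral_le_integral_abs.trans (integral_mono_ae ?_ hZ.abs ?_)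
    · exact (hZ.bdd_mul hXa (c := 1) hXb).abs
    · filter_upwards [hXb] with ω hω
      rw [abs_mul]
      exact mul_le_of_le_one_left (abs_nonneg _) hω
  have h3 : ∫ ω, |(P[W|m]) ω| ∂P
      = (∫ ω in A, (P[W|m]) ω ∂P) - ∫ ω in Aᶜ, (P[W|m]) ω ∂P := by
    rw [← integral_add_compl (hm _ hA) hZ.abs, sub_eq_add_neg, ← integral_neg]
    congr 1
    · exact setIntegral_congr_fun (hm _ hA) fun ω hω => abs_of_nonneg hω
    · exact setIntegral_congr_fun (hm _ hA.compl) fun ω hω => abs_of_neg (not_le.mp hω)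
  have h4 := integral_add_compl (hm _ hA) hW
  rw [setIntegral_condExp hm hW hA, setIntegral_condExp hm hW hA.compl] at h3
  rw [h1]
  linarith

/-- **Covariance–mixing inequality for bounded variables.**
Let `(Ω, ℱ, P)` be a probability space, `𝒜, ℬ ⊆ ℱ` sub-σ-algebras, `X` an `𝒜`-measurable and
`Y` a `ℬ`-measurable real random variable with `|X| ≤ 1` and `|Y| ≤ 1` almost surely. Then
`|Cov(X, Y)| = |E[XY] − E[X]E[Y]| ≤ 4 α(𝒜, ℬ)`. -/
theorem covariance_mixing_inequality {Ω : Type*} [m0 : MeasurableSpace Ω]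
    (P : Measure Ω) [IsProbabilityMeasure P]
    (𝒜 ℬ : MeasurableSpace Ω) (h𝒜 : 𝒜 ≤ m0) (hℬ : ℬ ≤ m0)
    (X Y : Ω → ℝ) (hX : Measurable[𝒜] X) (hY : Measurable[ℬ] Y)
    (hXb : ∀ᵐ ω ∂P, |X ω| ≤ 1) (hYb : ∀ᵐ ω ∂P, |Y ω| ≤ 1) :
    |covP P X Y| ≤ 4 * alphaMix P 𝒜 ℬ := by
  have hXa : AEStronglyMeasurable[m0] X P := (hX.mono h𝒜 le_rfl).aestronglyMeasurable
  have hYa : AEStronglyMeasurable[m0] Y P := (hY.mono hℬ le_rfl).aestronglyMeasurable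
  have hXi : Integrable[m0] X P := .of_bound hXa 1 hXb
  have hYi : Integrable[m0] Y P := .of_bound hYa 1 hYb
  have hXY : Integrable[m0] (fun ω => X ω * Y ω) P := hYi.bdd_mul hXa (c := 1) hXb
  obtain ⟨A, hA, hXA⟩ := exists_abs_integral_mul_le (W := fun ω => Y ω - ∫ ω', Y ω' ∂P) h𝒜 hX hXb
    (hYi.sub (integrable_const _)) (by
      rw [integral_sub hYi (integrable_const _)]; simp)
  have hA0 := h𝒜 _ hA
  have h1i : Integrable[m0] (A.indicator fun _ => (1 : ℝ)) P := (integrable_const _).indicator hA0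
  obtain ⟨B, hB, hYB⟩ := exists_abs_integral_mul_le
    (W := fun ω => A.indicator (fun _ => (1 : ℝ)) ω - P.real A) hℬ hY hYb
    (h1i.sub (integrable_const _)) (by
      rw [integral_sub h1i (integrable_const _), integral_indicator hA0]; simp)
  have hB0 := hℬ _ hB
  have e1 : ∫ ω, X ω * (Y ω - ∫ ω', Y ω' ∂P) ∂P = covP P X Y := by
    simp only [mul_sub]
    rw [integral_sub hXY (hXi.mul_const _), integral_mul_const]
    rfl
  -- Both sides are the covariance of `Y` and the indicator of `A`.
  have e2 : ∫ ω in A, (Y ω - ∫ ω', Y ω' ∂P) ∂P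
      = ∫ ω, Y ω * (A.indicator (fun _ => (1 : ℝ)) ω - P.real A) ∂P := by
    have hYA : ∀ ω, Y ω * A.indicator (fun _ => (1 : ℝ)) ω = A.indicator Y ω := fun ω => by
      by_cases h : ω ∈ A <;> simp [h]
    simp only [mul_sub, hYA]
    rw [integral_sub hYi.integrableOn (integrable_const _),
      integral_sub (hYi.indicator hA0) (hYi.mul_const _), integral_indicator hA0,
      integral_mul_const]
    simp [mul_comm]
  have e3 : ∫ ω in B, (A.indicator (fun _ => (1 : ℝ)) ω - P.real A) ∂P
      = (P (A ∩ B)).toReal - (P A).toReal * (P B).toReal := by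
    rw [integral_sub h1i.integrableOn (integrable_const _), setIntegral_indicator hA0]
    simp [Measure.real, Set.inter_comm, mul_comm]
  have hα : |(P (A ∩ B)).toReal - (P A).toReal * (P B).toReal| ≤ alphaMix P 𝒜 ℬ := by
    refine le_csSup ⟨1, ?_⟩ ⟨A, B, hA, hB, rfl⟩
    rintro c ⟨A', B', -, -, rfl⟩
    have p1 : P.real (A' ∩ B') ≤ 1 := measureReal_le_one
    have p2 : P.real A' ≤ 1 := measureReal_le_one
    have p3 : P.real B' ≤ 1 := measureReal_le_one
    have q1 : 0 ≤ P.real (A' ∩ B') := measureReal_nonneg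
    have q2 : 0 ≤ P.real A' := measureReal_nonneg
    have q3 : 0 ≤ P.real B' := measureReal_nonneg
    change |P.real (A' ∩ B') - P.real A' * P.real B'| ≤ 1
    rw [abs_le]
    constructor <;> nlinarith [mul_nonneg q2 q3, mul_le_one₀ p2 q3 p3]
  rw [e1, e2] at hXA
  rw [e3] at hYB
  linarith [le_abs_self (∫ ω, Y ω * (A.indicator (fun _ => (1 : ℝ)) ω - P.real A) ∂P),
    le_abs_self ((P (A ∩ B)).toReal - (P A).toReal * (P B).toReal)]
end

section
/- Coverage mass of weighted-quantile intervals. Let w_1, …, w_n be nonnegative reals with Σ_{i=1}^n w_i = 1, let s_1, …, s_n ∈ ℝ, let F̂(r) := Σ_{i=1}^n w_i·1{s_i ≤ r}, and for β ∈ (0,1] let Q̂_β := inf{ r : F̂(r) ≥ β }. Then for any 0 < β₁ ≤ β₂ ≤ 1, the weighted mass of the closed interval [Q̂_{β₁}, Q̂_{β₂}] satisfies Σ_{i : Q̂_{β₁} ≤ s_i ≤ Q̂_{β₂}} w_i ≥ β₂ − β₁. In particular, for α ∈ (0,1) and any β ∈ (0, α], the interval [Q̂_β, Q̂_{1−α+β}]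 (and in particular the symmetric choice β = α/2, as well as the width-minimizing choice β*) has weighted empirical mass at least 1 − α. -/
/-!
Only finitely many sample values occur, and the weighted CDF is constant between consecutive ones,
so for `0 < β ≤ 1` the infimum defining the `β`-quantile `Q β` is attained, at a sample value
(`isLeast_wQuantile`). Attainment gives that the mass of `{i | s i ≤ Q β}` is at least `β`, and
minimality gives that the mass of `{i | s i < Q β}` is at most `β` (`sum_lt_wQuantile_le`).
Since `{i | s i ≤ Q β₂}` is covered by `{i | s i < Q β₁}` and `{i | Q β₁ ≤ s i ≤ Q β₂}`, subtracting
the two bounds gives mass at least `β₂ - β₁` on the interval. The claim about `1 - α` is the case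
`β₁ = β`, `β₂ = 1 - α + β`.
-/

/-- The weighted empirical CDF of the values `s i` with weights `w i`:
`F̂ r = ∑ i, w i ⬝ 1{s i ≤ r}`. -/
noncomputable def wEmpCDF (n : ℕ) (w s : Fin n → ℝ) (r : ℝ) : ℝ :=
  ∑ i, if s i ≤ r then w i else 0

/-- The generalized `β`-quantile of the weighted empirical CDF:
`Q̂ β = inf {r | F̂ r ≥ β}`. -/
noncomputable def wQuantile (n : ℕ) (w s : Fin n → ℝ) (β : ℝ) : ℝ :=
  sInf {r : ℝ | β ≤ wEmpCDF n w s r}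

theorem wEmpCDF_eq_sum_filter (n : ℕ) (w s : Fin n → ℝ) (r : ℝ) :
    wEmpCDF n w s r = ∑ i ∈ Finset.univ.filter (fun i => s i ≤ r), w i := by
  rw [wEmpCDF, Finset.sum_filter]

/-- The index `j` is one at which `s` is maximal on `A`. -/
theorem exists_sum_le_wEmpCDF {n : ℕ} {w s : Fin n → ℝ} (hw : ∀ i, 0 ≤ w i)
    {A : Finset (Fin n)} (hA : A.Nonempty) :
    ∃ j ∈ A, ∑ i ∈ A, w i ≤ wEmpCDF n w s (s j) := by
  obtain ⟨j, hj, hmax⟩ := A.exists_max_image s hA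
  refine ⟨j, hj, ?_⟩
  rw [wEmpCDF_eq_sum_filter]
  refine Finset.sum_le_sum_of_subset_of_nonneg (fun i hi => ?_) (fun i _ _ => hw i)
  simpa using hmax i hi

/-- For `0 < β ≤ 1` the infimum in the definition of the quantile is a minimum. -/
theorem isLeast_wQuantile {n : ℕ} {w s : Fin n → ℝ} (hw : ∀ i, 0 ≤ w i)
    (hsum : ∑ i, w i = 1) {β : ℝ} (h0 : 0 < β) (h1 : β ≤ 1) :
    IsLeast {r : ℝ | β ≤ wEmpCDF n w s r} (wQuantile n w s β) := by
  -- Every `r` in the set dominates a sample value that is also in the set.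
  have key : ∀ r, β ≤ wEmpCDF n w s r → ∃ j, s j ≤ r ∧ β ≤ wEmpCDF n w s (s j) := by
    intro r hr
    rw [wEmpCDF_eq_sum_filter] at hr
    obtain ⟨j, hj, hle⟩ := exists_sum_le_wEmpCDF (s := s) hw
      (Finset.nonempty_of_sum_ne_zero (h0.trans_le hr).ne')
    exact ⟨j, by simpa using hj, hr.trans hle⟩
  have huniv : (Finset.univ : Finset (Fin n)).Nonempty :=
    Finset.nonempty_of_sum_ne_zero (f := w) (by simp [hsum])
  obtain ⟨j₀, -, hj₀⟩ := exists_sum_le_wEmpCDF (s := s) hw huniv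
  obtain ⟨k, hk, hmin⟩ :=
    (Finset.univ.filter (fun j => β ≤ wEmpCDF n w s (s j))).exists_min_image s
      ⟨j₀, by simpa using h1.trans (hsum ▸ hj₀)⟩
  have hleast : IsLeast {r : ℝ | β ≤ wEmpCDF n w s r} (s k) := by
    refine ⟨by simpa using hk, fun r hr => ?_⟩
    obtain ⟨j, hjr, hj⟩ := key r hr
    exact (hmin j (by simpa using hj)).trans hjr
  rw [wQuantile, hleast.csInf_eq]
  exact hleast

/-- If the mass strictly below the quantile exceeded `β`, the largest sample value below the
quantile would already have CDF at least `β`. -/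
theorem sum_lt_wQuantile_le {n : ℕ} {w s : Fin n → ℝ} (hw : ∀ i, 0 ≤ w i)
    (hsum : ∑ i, w i = 1) {β : ℝ} (h0 : 0 < β) (h1 : β ≤ 1) :
    ∑ i ∈ Finset.univ.filter (fun i => s i < wQuantile n w s β), w i ≤ β := by
  by_contra! h
  obtain ⟨j, hj, hle⟩ := exists_sum_le_wEmpCDF (s := s) hw
    (Finset.nonempty_of_sum_ne_zero (h0.trans h).ne')
  have hlt : s j < wQuantile n w s β := by simpa using hj
  exact hlt.not_ge ((isLeast_wQuantile hw hsum h0 h1).2 (h.le.trans hle))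

/-- **Coverage mass of weighted-quantile intervals.**
For nonnegative weights `w` summing to `1` and values `s`, and any `0 < β₁ ≤ β₂ ≤ 1`, the
weighted mass of the closed interval `[Q̂ β₁, Q̂ β₂]` is at least `β₂ − β₁`. In particular, for
`α ∈ (0,1)` and any `β ∈ (0, α]` (e.g. the symmetric choice `β = α/2` or the width-minimizing
choice `β⋆`), the interval `[Q̂ β, Q̂ (1 − α + β)]` has weighted empirical mass at least `1 − α`. -/
theorem coverage_mass_of_weighted_quantile_intervals (n : ℕ) (w s : Fin n → ℝ)
    (hw : ∀ i, 0 ≤ w i) (hsum : ∑ i, w i = 1) :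
    (∀ β₁ β₂ : ℝ, 0 < β₁ → β₁ ≤ β₂ → β₂ ≤ 1 →
      β₂ - β₁ ≤ ∑ i ∈ Finset.univ.filter
        (fun i => wQuantile n w s β₁ ≤ s i ∧ s i ≤ wQuantile n w s β₂), w i) ∧
    (∀ α β : ℝ, 0 < α → α < 1 → 0 < β → β ≤ α →
      1 - α ≤ ∑ i ∈ Finset.univ.filter
        (fun i => wQuantile n w s β ≤ s i ∧ s i ≤ wQuantile n w s (1 - α + β)), w i) := by
  have main : ∀ β₁ β₂ : ℝ, 0 < β₁ → β₁ ≤ β₂ → β₂ ≤ 1 →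
      β₂ - β₁ ≤ ∑ i ∈ Finset.univ.filter
        (fun i => wQuantile n w s β₁ ≤ s i ∧ s i ≤ wQuantile n w s β₂), w i := by
    intro β₁ β₂ h0 h12 h1
    have hlow := sum_lt_wQuantile_le (s := s) hw hsum h0 (h12.trans h1)
    have hup : β₂ ≤ wEmpCDF n w s (wQuantile n w s β₂) :=
      (isLeast_wQuantile hw hsum (h0.trans_le h12) h1).1
    have hcover : wEmpCDF n w s (wQuantile n w s β₂) ≤
        ∑ i ∈ Finset.univ.filter (fun i => s i < wQuantile n w s β₁), w i +
        ∑ i ∈ Finset.univ.filter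
          (fun i => wQuantile n w s β₁ ≤ s i ∧ s i ≤ wQuantile n w s β₂), w i := by
      rw [wEmpCDF, Finset.sum_filter, Finset.sum_filter, ← Finset.sum_add_distrib]
      refine Finset.sum_le_sum fun i _ => ?_
      have := hw i
      grind
    linarith
  exact ⟨main, fun α β _ hα hβ hβα =>
    le_of_eq_of_le (by ring) (main β (1 - α + β) hβ (by linarith) (by linarith))⟩
end
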